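/- Let r_{ij} > 0 for all 1 ≤ i,j ≤ d with r_{ii} = 1, d ≥ 2, and let l(θ) = Σ_{1 ≤ i,j ≤ d} (θ_i − r_{ij} θ_j)². If ξ minimizes l over the unit sphere, then no component of ξ is zero: ξ_i ≠ 0 for all i. -/

import Mathlib

open Finset

/-- If `d ≥ 2` and `ξ` minimizes `l(θ) = Σ_{i,j} (θ i − r i j · θ j)²` over the
unit sphere, then no component of `ξ` vanishes. -/
theorem minimizer_no_zero_component (d : ℕ) (hd : 2 ≤ d) (r : Fin d → Fin d → ℝ)
    (hr : ∀ i j, 0 < r i j) (hrd : ∀ i, r i i = 1)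
    (ξ : Fin d → ℝ) (hξ : ∑ i, ξ i ^ 2 = 1)
    (hmin : ∀ θ : Fin d → ℝ, ∑ i, θ i ^ 2 = 1 →
      ∑ i, ∑ j, (ξ i - r i j * ξ j) ^ 2 ≤ ∑ i, ∑ j, (θ i - r i j * θ j) ^ 2) :
    ∀ i, ξ i ≠ 0 := by
  intro k hk
  set m := ∑ i, ∑ j, (ξ i - r i j * ξ j) ^ 2 with hm
  have hom : ∀ θ : Fin d → ℝ, 0 < ∑ i, θ i ^ 2 →
      m * ∑ i, θ i ^ 2 ≤ ∑ i, ∑ j, (θ i - r i j * θ j) ^ 2 := by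
    intro θ hθ
    set s := ∑ i, θ i ^ 2 with hs
    have hsq : Real.sqrt s ^ 2 = s := Real.sq_sqrt hθ.le
    have h1 := hmin (fun i => θ i / Real.sqrt s) (by
      simp only [div_pow, hsq]
      rw [← Finset.sum_div, ← hs, div_self hθ.ne'])
    have h2 : ∑ i, ∑ j, (θ i / Real.sqrt s - r i j * (θ j / Real.sqrt s)) ^ 2
        = (∑ i, ∑ j, (θ i - r i j * θ j) ^ 2) / s := by
      simp only [Finset.sum_div]
      refine Finset.sum_congr rfl fun i _ => Finset.sum_congr rfl fun j _ => ?_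
      rw [← mul_div_assoc, ← sub_div, div_pow, hsq]
    rw [h2, le_div_iff₀ hθ] at h1
    exact h1
  obtain ⟨p, hp⟩ : ∃ p, ξ p ≠ 0 := by
    by_contra! h
    simp [h] at hξ
  set η : Fin d → ℝ := fun i => |ξ i| with hη
  set e : Fin d → ℝ := fun i => if i = k then 1 else 0 with he
  have hη0 : ∀ i, 0 ≤ η i := fun i => abs_nonneg _
  have he0 : ∀ i, 0 ≤ e i := fun i => by simp only [he]; split_ifs <;> norm_num
  have hηe : ∀ i, η i * e i = 0 := fun i => by
    by_cases h : i = k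
    · simp [hη, h, hk]
    · simp [he, h]
  have hηs : ∑ i, η i ^ 2 = 1 := by simpa [hη] using hξ
  have hes : ∑ i, e i ^ 2 = 1 := by simp [he]
  have hηm : ∑ i, ∑ j, (η i - r i j * η j) ^ 2 ≤ m := by
    refine Finset.sum_le_sum fun i _ => Finset.sum_le_sum fun j _ => ?_
    have h1 : η i ^ 2 = ξ i ^ 2 := sq_abs _
    have h2 : η j ^ 2 = ξ j ^ 2 := sq_abs _
    have h3 : ξ i * ξ j ≤ η i * η j := by
      have := le_abs_self (ξ i * ξ j)
      rwa [abs_mul] at this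
    have h4 := mul_le_mul_of_nonneg_left h3 (hr i j).le
    calc (η i - r i j * η j) ^ 2 = η i ^ 2 - 2 * (r i j * (η i * η j)) + r i j ^ 2 * η j ^ 2 := by ring
      _ ≤ ξ i ^ 2 - 2 * (r i j * (ξ i * ξ j)) + r i j ^ 2 * ξ j ^ 2 := by rw [h1, h2]; linarith
      _ = _ := by ring
  set B := ∑ i, ∑ j, (η i - r i j * η j) * (e i - r i j * e j) with hB
  set C := ∑ i, ∑ j, (e i - r i j * e j) ^ 2 with hC
  have hterm : ∀ i j, (η i - r i j * η j) * (e i - r i j * e j)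
      = -(r i j * (η i * e j + η j * e i)) := fun i j => by
    linear_combination hηe i + r i j ^ 2 * hηe j
  have hle : ∀ i j, (η i - r i j * η j) * (e i - r i j * e j) ≤ 0 := fun i j => by
    rw [hterm]
    have := mul_nonneg (hr i j).le
      (add_nonneg (mul_nonneg (hη0 i) (he0 j)) (mul_nonneg (hη0 j) (he0 i)))
    linarith
  have hBneg : B < 0 := by
    refine Finset.sum_neg' (fun i _ => Finset.sum_nonpos fun j _ => hle i j)
      ⟨p, Finset.mem_univ _, ?_⟩
    refine Finset.sum_neg' (fun j _ => hle p j) ⟨k, Finset.mem_univ _, ?_⟩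
    rw [hterm]
    have h1 : 0 < η p := abs_pos.mpr hp
    have h2 : e k = 1 := by simp [he]
    have h3 := mul_nonneg (hη0 k) (he0 p)
    have := mul_pos (hr p k) (show 0 < η p * e k + η k * e p by rw [h2]; linarith)
    linarith
  have key : ∀ t : ℝ, 0 ≤ 2 * t * B + t ^ 2 * (C - m) := by
    intro t
    have hs : ∑ i, (η i + t * e i) ^ 2 = 1 + t ^ 2 := by
      have : ∀ i, (η i + t * e i) ^ 2 = η i ^ 2 + t ^ 2 * e i ^ 2 := fun i => by
        linear_combination 2 * t * hηe i
      simp only [this, Finset.sum_add_distrib, ← Finset.mul_sum, hηs, hes, mul_one]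
    have h1 := hom (fun i => η i + t * e i) (by simp only [hs]; positivity)
    have h2 : ∑ i, ∑ j, ((η i + t * e i) - r i j * (η j + t * e j)) ^ 2
        = ∑ i, ∑ j, (η i - r i j * η j) ^ 2 + 2 * t * B + t ^ 2 * C := by
      simp only [hB, hC, Finset.mul_sum, ← Finset.sum_add_distrib]
      refine Finset.sum_congr rfl fun i _ => Finset.sum_congr rfl fun j _ => ?_
      ring
    simp only [hs] at h1
    rw [h2] at h1
    linarith
  have hD : 0 < |C - m| + 1 := by positivity
  have h := key (-B / (|C - m| + 1))
  set t := -B / (|C - m| + 1) with ht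
  have htpos : 0 < t := div_pos (by linarith) hD
  have htD : t * (|C - m| + 1) = -B := div_mul_cancel₀ _ hD.ne'
  have h5 : 0 ≤ t * (2 * B + t * (C - m)) := by linarith [h, show t * (2 * B + t * (C - m)) = 2 * t * B + t ^ 2 * (C - m) by ring]
  have h6 := nonneg_of_mul_nonneg_right h5 htpos
  have h7 := mul_le_mul_of_nonneg_left (le_abs_self (C - m)) htpos.le
  linarith
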